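/- Fix n ≥ 1, γ ∈ [0,1), α ∈ (0,1), and let c ∈ ℝ^n with 0 ≤ c_1 ≤ ⋯ ≤ c_n. Let D = max_{1 ≤ i ≤ n} (A^{FDP-SU}(γ) · c)_i and assume D > 0 and α·c_n/D ≤ 1. Then for every probability space (Ω, P), every family of p-values PV_1, …, PV_n : Ω → [0,1] and every nonempty set I ⊆ {1,…,n} of true hypotheses with P(PV_i ≤ u) ≤ u for all i ∈ I and u ∈ (0,1), the step-up procedure with rescaled critical constants c̃_j = α·c_j/D satisfies P(FDP > γ) ≤ α. -/

import Mathlib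

/-!
Control of the false discovery proportion by a Markov-type argument with the rows of
`A^{FDP-SU}(γ)` as weights.

Let `i = |I|`. If the procedure rejects `r ≥ 1` hypotheses and `V/r > γ`, then `V ≥ m(r)`, and
since at most `n - i` rejections are correct also `V ≥ r - (n - i)`; hence at least `g_i(r)` true
p-values lie below the `r`-th critical constant, and `r ≤ M̃(i)` because `V ≤ i`
(`gg_le_of_lt_FDPSU`).

The function `g_i` is nondecreasing with increments at most `1`, so the tail sums
`∑_{l ≥ r} A_{il}` telescope to at least `i / g_i(r)` (`div_gg_le_sum`). Thus the random variable
`∑_{j ∈ I} ∑_l (A_{il} / i) 1{PV_j ≤ c̃_l}` is at least `1` on the event `FDP > γ`: each of the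
`g_i(r)` small p-values contributes at least `1 / g_i(r)`. Its mean is at most
`∑_l A_{il} c̃_l ≤ α`, and Markov's inequality concludes. As the p-values need not be measurable,
the events `{PV_j ≤ c̃_l}` are replaced by measurable supersets of equal outer measure.
-/

open MeasureTheory

noncomputable section

namespace GenError

variable {Ω : Type*}

/-- The number of indices `i ∈ s` whose p-value at `ω` is at most `x`
(used to express order statistics: the `k`-th smallest of the `PV i`, `i ∈ s`,
is `≤ x` iff `k ≤ numLe s PV x ω`). -/
def numLe (s : Finset ℕ) (PV : ℕ → Ω → ℝ) (x : ℝ) (ω : Ω) : ℕ :=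
  (s.filter fun i => PV i ω ≤ x).card

/-- Number of rejections of the step-up procedure with critical constants `c` on
hypotheses `1, …, n`: `max {i : PV_(i) ≤ c i}` (and `0` if no such `i` exists). -/
def numRejSU (n : ℕ) (PV : ℕ → Ω → ℝ) (c : ℕ → ℝ) (ω : Ω) : ℕ :=
  ((Finset.Icc 1 n).filter fun i => i ≤ numLe (Finset.Icc 1 n) PV (c i) ω).sup id

open scoped Classical in
/-- Number of rejections of the step-down procedure with critical constants `c` on
hypotheses `1, …, n`: `max {i : ∀ j ≤ i, PV_(j) ≤ c j}` (and `0` if `PV_(1) > c 1`). -/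
def numRejSD (n : ℕ) (PV : ℕ → Ω → ℝ) (c : ℕ → ℝ) (ω : Ω) : ℕ :=
  ((Finset.Icc 1 n).filter fun i =>
      ∀ j ∈ Finset.Icc 1 i, j ≤ numLe (Finset.Icc 1 n) PV (c j) ω).sup id

/-- Number of rejected true hypotheses when `R` hypotheses are rejected by a stepwise
procedure with nondecreasing critical constants `c` (the rejected hypotheses, i.e. those
attaining the `R` smallest p-values, are exactly those with p-value `≤ c R`). -/
def numFalse (PV : ℕ → Ω → ℝ) (c : ℕ → ℝ) (I : Finset ℕ) (R : ℕ) (ω : Ω) : ℕ :=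
  if R = 0 then 0 else (I.filter fun i => PV i ω ≤ c R).card

/-- `V` for the step-up procedure. -/
def VSU (n : ℕ) (PV : ℕ → Ω → ℝ) (c : ℕ → ℝ) (I : Finset ℕ) (ω : Ω) : ℕ :=
  numFalse PV c I (numRejSU n PV c ω) ω

/-- `V` for the step-down procedure. -/
def VSD (n : ℕ) (PV : ℕ → Ω → ℝ) (c : ℕ → ℝ) (I : Finset ℕ) (ω : Ω) : ℕ :=
  numFalse PV c I (numRejSD n PV c ω) ω

/-- False discovery proportion of the step-up procedure: `V/R` if `R > 0`, else `0`. -/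
def FDPSU (n : ℕ) (PV : ℕ → Ω → ℝ) (c : ℕ → ℝ) (I : Finset ℕ) (ω : Ω) : ℝ :=
  if numRejSU n PV c ω = 0 then 0
  else (VSU n PV c I ω : ℝ) / (numRejSU n PV c ω : ℝ)

/-- False discovery proportion of the step-down procedure: `V/R` if `R > 0`, else `0`. -/
def FDPSD (n : ℕ) (PV : ℕ → Ω → ℝ) (c : ℕ → ℝ) (I : Finset ℕ) (ω : Ω) : ℝ :=
  if numRejSD n PV c ω = 0 then 0
  else (VSD n PV c I ω : ℝ) / (numRejSD n PV c ω : ℝ)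

/-- The matrix `A^{kFWER-SU}(k)` (rows/columns indexed by `1, …, n`). -/
def AkSU (n k i j : ℕ) : ℝ :=
  if i < k then 0
  else if j < n + k - i then 0
  else if j < n then (i : ℝ) * (1 / ((j + i - n : ℕ) : ℝ) - 1 / (((j + i - n : ℕ) : ℝ) + 1))
  else if j = n then 1
  else 0

/-- The matrix `A^{kFWER-SD}(k)` (rows/columns indexed by `1, …, n`). -/
def AkSD (n k i j : ℕ) : ℝ :=
  if k ≤ i ∧ j = n - i + k then (i : ℝ) / (k : ℝ) else 0

/-- `m(j) = ⌊γ j⌋ + 1`. -/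
def mfl (γ : ℝ) (j : ℕ) : ℕ := (⌊γ * (j : ℝ)⌋).toNat + 1

/-- `M̃(i) = max {l ∈ {1,…,n} : m(l) ≤ i}`. -/
def Mt (γ : ℝ) (n i : ℕ) : ℕ :=
  ((Finset.Icc 1 n).filter fun l => mfl γ l ≤ i).sup id

/-- `g_i(l) = max (i - n + l, m(l))`. -/
def gg (γ : ℝ) (n i l : ℕ) : ℕ := max (i + l - n) (mfl γ l)

/-- `M(i) = g_i(M̃(i))`. -/
def MM (γ : ℝ) (n i : ℕ) : ℕ := gg γ n i (Mt γ n i)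

/-- `t_k(i) = max {l ∈ {1,…,M̃(i)} : g_i(l) = k}`. -/
def tt (γ : ℝ) (n i k : ℕ) : ℕ :=
  ((Finset.Icc 1 (Mt γ n i)).filter fun l => gg γ n i l = k).sup id

/-- The matrix `A^{FDP-SU}(γ)`: the entry in column `j = t_k(i)` for `1 ≤ k < M(i)` is
`i (1/k - 1/(k+1))` (such a `k` necessarily equals `g_i(j)`), the entry in column
`j = t_{M(i)}(i)` is `i / M(i)`, and all other entries vanish. -/
def AFDPSU (γ : ℝ) (n i j : ℕ) : ℝ :=
  if j = tt γ n i (MM γ n i) then (i : ℝ) / (MM γ n i : ℝ)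
  else if 1 ≤ gg γ n i j ∧ gg γ n i j < MM γ n i ∧ j = tt γ n i (gg γ n i j) then
    (i : ℝ) * (1 / (gg γ n i j : ℝ) - 1 / ((gg γ n i j : ℝ) + 1))
  else 0

/-- `k_i(l) = min (n, n + l - i, ⌈l/γ⌉ - 1)`. -/
def kk (γ : ℝ) (n i l : ℕ) : ℕ :=
  min n (min (n + l - i) ((⌈(l : ℝ) / γ⌉).toNat - 1))

/-- `N(i) = min (⌊γ n⌋ + 1, i, ⌊γ ((n - i)/(1 - γ) + 1)⌋ + 1)`. -/
def NN (γ : ℝ) (n i : ℕ) : ℕ :=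
  min ((⌊γ * (n : ℝ)⌋).toNat + 1)
    (min i ((⌊γ * ((((n : ℝ) - (i : ℝ)) / (1 - γ)) + 1)⌋).toNat + 1))

/-- The matrix `Ã` for the step-down FDP bound. -/
def Atilde (γ : ℝ) (n i j : ℕ) : ℝ :=
  if 1 ≤ j ∧ j < NN γ n i then (i : ℝ) * (1 / (j : ℝ) - 1 / ((j : ℝ) + 1))
  else if j = NN γ n i then (i : ℝ) / (NN γ n i : ℝ)
  else 0

/-- The matrix `A^{FDP-SD}(γ)`: `A i j = ∑_{l : k_i(l) = j} Ã i l` when `j` is in the image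
`M(i)` of `k_i`, and `0` otherwise (the sum over the empty fibre being `0`). -/
def AFDPSD (γ : ℝ) (n i j : ℕ) : ℝ :=
  ∑ l ∈ (Finset.Icc 1 ((⌊γ * (n : ℝ)⌋).toNat + 1)).filter (fun l => kk γ n i l = j),
    Atilde γ n i l

/-- The vector `β(i)` built from constants `c` for the step-down FDP bound:
`β_l(i) = c (k_i(l))` for `1 ≤ l ≤ ⌊γ n⌋ + 1`, and `0` otherwise. -/
def betaVec (γ : ℝ) (n i : ℕ) (c : ℕ → ℝ) (l : ℕ) : ℝ :=
  if 1 ≤ l ∧ l ≤ (⌊γ * (n : ℝ)⌋).toNat + 1 then c (kk γ n i l) else 0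

/-- `β_l(i) = c (k_i(l))`, with the convention `β_0(i) = 0`. -/
def betaSD (γ : ℝ) (n i : ℕ) (c : ℕ → ℝ) (l : ℕ) : ℝ :=
  if l = 0 then 0 else c (kk γ n i l)

/-- `c (t_k(i))`, with the convention that the value at `k = 0` is `0`. -/
def cT (γ : ℝ) (n i : ℕ) (c : ℕ → ℝ) (k : ℕ) : ℝ :=
  if k = 0 then 0 else c (tt γ n i k)

/-- The Lehmann–Romano constants `d^{LR}_j = k/(n + k - j)`. -/
def dLR (n k j : ℕ) : ℝ := (k : ℝ) / ((n + k - j : ℕ) : ℝ)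

lemma mfl_mono {γ : ℝ} (h0 : 0 ≤ γ) {a b : ℕ} (h : a ≤ b) : mfl γ a ≤ mfl γ b := by
  unfold mfl
  have h1 : γ * (a : ℝ) ≤ γ * b := mul_le_mul_of_nonneg_left (by exact_mod_cast h) h0
  have := Int.floor_le_floor h1
  omega

lemma mfl_succ_le {γ : ℝ} (h1 : γ < 1) (a : ℕ) : mfl γ (a + 1) ≤ mfl γ a + 1 := by
  unfold mfl
  have h2 : γ * ((a + 1 : ℕ) : ℝ) ≤ γ * a + 1 := by push_cast; linarith
  have := Int.floor_le_floor h2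
  rw [Int.floor_add_one] at this
  omega

lemma one_le_gg (γ : ℝ) (n i l : ℕ) : 1 ≤ gg γ n i l :=
  le_max_of_le_right (by unfold mfl; omega)

lemma gg_mono {γ : ℝ} (h0 : 0 ≤ γ) (n i : ℕ) {a b : ℕ} (h : a ≤ b) :
    gg γ n i a ≤ gg γ n i b := by
  unfold gg
  have := mfl_mono h0 h
  omega

lemma gg_succ_le {γ : ℝ} (h1 : γ < 1) (n i a : ℕ) : gg γ n i (a + 1) ≤ gg γ n i a + 1 := by
  unfold gg
  have := mfl_succ_le h1 a
  omega

lemma Mt_le (γ : ℝ) (n i : ℕ) : Mt γ n i ≤ n :=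
  Finset.sup_le fun l hl => (Finset.mem_Icc.1 (Finset.mem_filter.1 hl).1).2

lemma tt_eq {γ : ℝ} {n i r : ℕ} (hr1 : 1 ≤ r) (hr : r ≤ Mt γ n i)
    (hmax : ∀ l, r < l → l ≤ Mt γ n i → gg γ n i l ≠ gg γ n i r) :
    tt γ n i (gg γ n i r) = r := by
  apply le_antisymm
  · refine Finset.sup_le fun l hl => ?_
    simp only [Finset.mem_filter, Finset.mem_Icc] at hl
    by_contra hlr
    exact hmax l (not_le.1 hlr) hl.1.2 hl.2
  · exact Finset.le_sup (f := id) (by simp [hr1, hr])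

lemma AFDPSU_nonneg (γ : ℝ) (n i j : ℕ) : 0 ≤ AFDPSU γ n i j := by
  unfold AFDPSU
  split_ifs with h1 h2
  · positivity
  · have : (0 : ℝ) < gg γ n i j := by exact_mod_cast h2.1
    refine mul_nonneg (by positivity) (sub_nonneg.2 ?_)
    exact one_div_le_one_div_of_le this (by linarith)
  · exact le_rfl

/-- The tail sums of a row of `A^{FDP-SU}(γ)`: going down from `r = M̃(i)`, the bound `i / g_i(r)`
only changes where `g_i` jumps, and there `r = t_{g_i(r)}(i)`, so the entry in column `r` makes up
exactly the difference. -/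
lemma div_gg_le_sum {γ : ℝ} (h0 : 0 ≤ γ) (h1 : γ < 1) (n i : ℕ) (d : ℕ) :
    ∀ r, 1 ≤ r → r + d = Mt γ n i →
      (i : ℝ) / gg γ n i r ≤ ∑ l ∈ Finset.Icc r n, AFDPSU γ n i l := by
  induction d with
  | zero =>
    intro r hr1 hr
    have hr' : r = Mt γ n i := by omega
    have hA : AFDPSU γ n i r = (i : ℝ) / gg γ n i r := by
      have hM : MM γ n i = gg γ n i r := by rw [hr']; rfl
      have ht : tt γ n i (gg γ n i r) = r := tt_eq hr1 hr'.le (fun l h h' => by omega)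
      unfold AFDPSU
      rw [hM, ht, if_pos rfl]
    rw [← hA]
    exact Finset.single_le_sum (f := fun l => AFDPSU γ n i l)
      (fun l _ => AFDPSU_nonneg γ n i l) (by simp [hr'.trans_le (Mt_le γ n i)])
  | succ d ih =>
    intro r hr1 hr
    have hrn : r ≤ n := by have := Mt_le γ n i; omega
    have IH := ih (r + 1) (by omega) (by omega)
    have hsplit : ∑ l ∈ Finset.Icc r n, AFDPSU γ n i l
        = AFDPSU γ n i r + ∑ l ∈ Finset.Icc (r + 1) n, AFDPSU γ n i l := by
      rw [← Finset.insert_Icc_add_one_left_eq_Icc hrn, Finset.sum_insert (by simp)]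
    rw [hsplit]
    have hmono := gg_mono h0 n i (Nat.le_succ r)
    have hstep := gg_succ_le h1 n i r
    rcases (show gg γ n i (r + 1) = gg γ n i r ∨ gg γ n i (r + 1) = gg γ n i r + 1 by
      simp only [Nat.succ_eq_add_one] at hmono; omega) with h | h
    · rw [h] at IH
      linarith [AFDPSU_nonneg γ n i r]
    · have hlt : ∀ l, r < l → gg γ n i r < gg γ n i l := fun l hl => by
        have := gg_mono h0 n i (show r + 1 ≤ l from hl)
        omega
      have ht : tt γ n i (gg γ n i r) = r :=
        tt_eq hr1 (by omega) (fun l hl _ => (hlt l hl).ne')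
      have htM : tt γ n i (MM γ n i) = Mt γ n i :=
        tt_eq (by omega) le_rfl (fun l h h' => by omega)
      have hA : AFDPSU γ n i r
          = (i : ℝ) * (1 / (gg γ n i r : ℝ) - 1 / ((gg γ n i r : ℝ) + 1)) := by
        unfold AFDPSU
        rw [htM, if_neg (by omega),
          if_pos ⟨one_le_gg γ n i r, hlt _ (by omega), ht.symm⟩]
      rw [hA]
      rw [h] at IH
      push_cast at IH
      have : (i : ℝ) * (1 / (gg γ n i r : ℝ) - 1 / ((gg γ n i r : ℝ) + 1))
          = (i : ℝ) / gg γ n i r - (i : ℝ) / ((gg γ n i r : ℝ) + 1) := by ring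
      linarith

/-- If the false discovery proportion exceeds `γ`, then for some `r ≤ M̃(|I|)` at least
`g_{|I|}(r)` true p-values are below the `r`-th critical constant. -/
lemma gg_le_of_lt_FDPSU {Ω : Type*} {n : ℕ} {γ : ℝ} (h0 : 0 ≤ γ) {c : ℕ → ℝ}
    {PV : ℕ → Ω → ℝ} {I : Finset ℕ} (hI : I ⊆ Finset.Icc 1 n) {ω : Ω}
    (h : γ < FDPSU n PV c I ω) :
    ∃ r, 1 ≤ r ∧ r ≤ Mt γ n I.card ∧
      gg γ n I.card r ≤ (I.filter fun j => PV j ω ≤ c r).card := by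
  unfold FDPSU at h
  split_ifs at h with hR
  · exact absurd h (not_lt.2 h0)
  have hne : ((Finset.Icc 1 n).filter fun i =>
      i ≤ numLe (Finset.Icc 1 n) PV (c i) ω).Nonempty := by
    rw [Finset.nonempty_iff_ne_empty]
    intro he
    apply hR
    unfold numRejSU
    rw [he]
    rfl
  obtain ⟨r, hr, hreq⟩ := Finset.exists_mem_eq_sup _ hne id
  change numRejSU n PV c ω = r at hreq
  simp only [VSU, numFalse, hreq] at h hR
  rw [if_neg hR] at h
  simp only [Finset.mem_filter, Finset.mem_Icc] at hr
  set V := (I.filter fun j => PV j ω ≤ c r).card with hV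
  have hr0 : (0 : ℝ) < r := by exact_mod_cast hr.1.1
  have hm : mfl γ r ≤ V := by
    rw [lt_div_iff₀ hr0] at h
    have hfl : ⌊γ * (r : ℝ)⌋ < (V : ℤ) := Int.floor_lt.2 (by exact_mod_cast h)
    have h00 : 0 ≤ ⌊γ * (r : ℝ)⌋ := Int.floor_nonneg.2 (by positivity)
    unfold mfl
    omega
  have hVi : V ≤ I.card := Finset.card_filter_le _ _
  have hcount : r ≤ V + (n - I.card) := by
    refine hr.2.trans ?_
    unfold numLe
    have hsub : ((Finset.Icc 1 n).filter fun j => PV j ω ≤ c r) ⊆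
        (I.filter fun j => PV j ω ≤ c r) ∪ (Finset.Icc 1 n \ I) := by
      intro j hj
      simp only [Finset.mem_filter, Finset.mem_union, Finset.mem_sdiff] at hj ⊢
      tauto
    refine (Finset.card_le_card hsub).trans ((Finset.card_union_le _ _).trans ?_)
    rw [Finset.card_sdiff_of_subset hI, Nat.card_Icc]
    omega
  have hIn : I.card ≤ n := by simpa using Finset.card_le_card hI
  refine ⟨r, hr.1.1, ?_, ?_⟩
  · exact Finset.le_sup (f := id) (by simp [hr.1.1, hr.1.2, hm.trans hVi])
  · unfold gg
    omega

lemma measure_le_of_mem_Icc {Ω : Type*} [MeasurableSpace Ω] (P : Measure Ω)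
    [IsProbabilityMeasure P] {X : Ω → ℝ}
    (hX : ∀ u ∈ Set.Ioo (0 : ℝ) 1, P {ω | X ω ≤ u} ≤ ENNReal.ofReal u)
    {u : ℝ} (h0 : 0 ≤ u) (h1 : u ≤ 1) : P {ω | X ω ≤ u} ≤ ENNReal.ofReal u := by
  rcases h1.eq_or_lt with rfl | h1
  · simpa using prob_le_one
  rcases h0.eq_or_lt with rfl | h0
  · -- At `u = 0` the bound is the limit of the bounds at `ε ↓ 0`.
    rw [ENNReal.ofReal_zero]
    refine ENNReal.le_of_forall_pos_le_add fun ε hε _ => ?_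
    have hpos : (0 : ℝ) < min (ε : ℝ) (1 / 2) := lt_min (by exact_mod_cast hε) (by norm_num)
    calc P {ω | X ω ≤ 0} ≤ P {ω | X ω ≤ min (ε : ℝ) (1 / 2)} :=
          measure_mono fun ω (hω : X ω ≤ 0) => hω.trans hpos.le
      _ ≤ ENNReal.ofReal (min (ε : ℝ) (1 / 2)) :=
          hX _ ⟨hpos, (min_le_right _ _).trans_lt (by norm_num)⟩
      _ ≤ ENNReal.ofReal ε := ENNReal.ofReal_le_ofReal (min_le_left _ _)
      _ = 0 + ε := by simp
  · exact hX u ⟨h0, h1⟩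

/-- FDP control of the rescaled step-up procedure. -/
theorem statement7 {Ω : Type*} [MeasurableSpace Ω] (P : Measure Ω) [IsProbabilityMeasure P]
    (n : ℕ) (hn : 1 ≤ n) (γ : ℝ) (hγ : γ ∈ Set.Ico (0 : ℝ) 1)
    (α : ℝ) (hα : α ∈ Set.Ioo (0 : ℝ) 1)
    (c : ℕ → ℝ) (hc1 : 0 ≤ c 1) (hcmono : MonotoneOn c (Set.Icc 1 n))
    (D : ℝ)
    (hDub : ∀ i ∈ Finset.Icc 1 n, ∑ j ∈ Finset.Icc 1 n, AFDPSU γ n i j * c j ≤ D)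
    (hDmem : ∃ i ∈ Finset.Icc 1 n, ∑ j ∈ Finset.Icc 1 n, AFDPSU γ n i j * c j = D)
    (hDpos : 0 < D) (hscale : α * c n / D ≤ 1)
    (PV : ℕ → Ω → ℝ) (hPV : ∀ i ∈ Finset.Icc 1 n, ∀ ω, PV i ω ∈ Set.Icc (0 : ℝ) 1)
    (I : Finset ℕ) (hI : I ⊆ Finset.Icc 1 n) (hIne : I.Nonempty)
    (hnull : ∀ i ∈ I, ∀ u ∈ Set.Ioo (0 : ℝ) 1, P {ω | PV i ω ≤ u} ≤ ENNReal.ofReal u) :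
    P {ω | γ < FDPSU n PV (fun j => α * c j / D) I ω} ≤ ENNReal.ofReal α := by
  have hi1 : 1 ≤ I.card := hIne.card_pos
  have hin : I.card ≤ n := by simpa using Finset.card_le_card hI
  have hi0 : (0 : ℝ) < I.card := by exact_mod_cast hi1
  have hc0 : ∀ l ∈ Finset.Icc 1 n, 0 ≤ α * c l / D := fun l hl => by
    have hl' := Finset.mem_Icc.1 hl
    have : 0 ≤ c l := hc1.trans (hcmono ⟨le_rfl, hn⟩ hl' hl'.1)
    exact div_nonneg (mul_nonneg hα.1.le this) hDpos.le
  have hcm : ∀ r l, 1 ≤ r → r ≤ l → l ≤ n → α * c r / D ≤ α * c l / D := fun r l h1 h2 h3 =>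
    div_le_div_of_nonneg_right (mul_le_mul_of_nonneg_left
      (hcmono ⟨h1, h2.trans h3⟩ ⟨h1.trans h2, h3⟩ h2) hα.1.le) hDpos.le
  have hcle : ∀ l ∈ Finset.Icc 1 n, α * c l / D ≤ 1 := fun l hl => by
    have hl' := Finset.mem_Icc.1 hl
    exact (hcm l n hl'.1 hl'.2 le_rfl).trans hscale
  set w : ℕ → ℝ := fun l => AFDPSU γ n I.card l / I.card with hw
  have hw0 : ∀ l, 0 ≤ w l := fun l => div_nonneg (AFDPSU_nonneg _ _ _ _) hi0.le
  set E : ℕ → ℕ → Set Ω := fun j l => toMeasurable P {ω | PV j ω ≤ α * c l / D} with hE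
  set F : Ω → ENNReal := fun ω => ∑ j ∈ I, ∑ l ∈ Finset.Icc 1 n,
    ENNReal.ofReal (w l) * (E j l).indicator 1 ω with hF
  have hEm : ∀ j l, MeasurableSet (E j l) := fun j l => measurableSet_toMeasurable _ _
  have hterm : ∀ j l, Measurable fun ω =>
      ENNReal.ofReal (w l) * (E j l).indicator (1 : Ω → ENNReal) ω := fun j l =>
    (measurable_one.indicator (hEm j l)).const_mul _
  have hsub : {ω | γ < FDPSU n PV (fun j => α * c j / D) I ω} ⊆ {ω | 1 ≤ F ω} := by
    intro ω hω
    obtain ⟨r, hr1, hrM, hg⟩ := gg_le_of_lt_FDPSU hγ.1 hI hω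
    set G := I.filter fun j => PV j ω ≤ α * c r / D with hG
    have hg0 : (0 : ℝ) < gg γ n I.card r := by exact_mod_cast one_le_gg γ n I.card r
    have htail : 1 / (gg γ n I.card r : ℝ) ≤ ∑ l ∈ Finset.Icc r n, w l := by
      have h := div_gg_le_sum hγ.1 hγ.2 n I.card (Mt γ n I.card - r) r hr1 (by omega)
      rw [hw, ← Finset.sum_div, le_div_iff₀ hi0]
      calc _ = (I.card : ℝ) / gg γ n I.card r := by ring
        _ ≤ _ := h
    -- A p-value below the `r`-th constant lies below the `l`-th one for every `l ≥ r`.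
    have hj : ∀ j ∈ G, ENNReal.ofReal (1 / (gg γ n I.card r : ℝ)) ≤
        ∑ l ∈ Finset.Icc 1 n, ENNReal.ofReal (w l) * (E j l).indicator 1 ω := by
      intro j hj
      calc ENNReal.ofReal (1 / (gg γ n I.card r : ℝ))
          ≤ ENNReal.ofReal (∑ l ∈ Finset.Icc r n, w l) := ENNReal.ofReal_le_ofReal htail
        _ = ∑ l ∈ Finset.Icc r n, ENNReal.ofReal (w l) :=
            ENNReal.ofReal_sum_of_nonneg fun l _ => hw0 l
        _ = ∑ l ∈ Finset.Icc r n, ENNReal.ofReal (w l) * (E j l).indicator 1 ω := by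
            refine Finset.sum_congr rfl fun l hl => ?_
            have hl' := Finset.mem_Icc.1 hl
            have hmem : ω ∈ E j l := subset_toMeasurable _ _
              ((Finset.mem_filter.1 hj).2.trans (hcm r l hr1 hl'.1 hl'.2))
            rw [Set.indicator_of_mem hmem, Pi.one_apply, mul_one]
        _ ≤ _ := Finset.sum_le_sum_of_subset (Finset.Icc_subset_Icc_left hr1)
    calc (1 : ENNReal)
        = ENNReal.ofReal (gg γ n I.card r * (1 / (gg γ n I.card r : ℝ))) := by
          rw [mul_one_div_cancel hg0.ne', ENNReal.ofReal_one]
      _ ≤ ENNReal.ofReal (G.card * (1 / (gg γ n I.card r : ℝ))) :=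
          ENNReal.ofReal_le_ofReal (mul_le_mul_of_nonneg_right (by exact_mod_cast hg)
            (by positivity))
      _ = ∑ j ∈ G, ENNReal.ofReal (1 / (gg γ n I.card r : ℝ)) := by
          rw [ENNReal.ofReal_mul (by positivity), ENNReal.ofReal_natCast, Finset.sum_const,
            nsmul_eq_mul]
      _ ≤ ∑ j ∈ G, ∑ l ∈ Finset.Icc 1 n, ENNReal.ofReal (w l) * (E j l).indicator 1 ω :=
          Finset.sum_le_sum hj
      _ ≤ F ω := Finset.sum_le_sum_of_subset (Finset.filter_subset _ _)
  have hFm : Measurable F :=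
    Finset.measurable_fun_sum _ fun j _ => Finset.measurable_fun_sum _ fun l _ => hterm j l
  calc P {ω | γ < FDPSU n PV (fun j => α * c j / D) I ω}
      ≤ P {ω | 1 ≤ F ω} := measure_mono hsub
    _ ≤ ∫⁻ ω, F ω ∂P := by simpa using mul_meas_ge_le_lintegral hFm 1 (μ := P)
    _ = ∑ j ∈ I, ∑ l ∈ Finset.Icc 1 n,
          ENNReal.ofReal (w l) * P {ω | PV j ω ≤ α * c l / D} := by
        rw [lintegral_finsetSum _ fun j _ => Finset.measurable_fun_sum _ fun l _ => hterm j l]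
        refine Finset.sum_congr rfl fun j _ => ?_
        rw [lintegral_finsetSum _ fun l _ => hterm j l]
        refine Finset.sum_congr rfl fun l _ => ?_
        rw [lintegral_const_mul _ (measurable_one.indicator (hEm j l)),
          lintegral_indicator_one (hEm j l), measure_toMeasurable]
    _ ≤ ∑ j ∈ I, ∑ l ∈ Finset.Icc 1 n, ENNReal.ofReal (w l * (α * c l / D)) := by
        refine Finset.sum_le_sum fun j hj => Finset.sum_le_sum fun l hl => ?_
        rw [ENNReal.ofReal_mul (hw0 l)]
        gcongr
        exact measure_le_of_mem_Icc P (hnull j hj) (hc0 l hl) (hcle l hl)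
    _ = ENNReal.ofReal (I.card * ∑ l ∈ Finset.Icc 1 n, w l * (α * c l / D)) := by
        rw [Finset.sum_const, nsmul_eq_mul, ENNReal.ofReal_mul (by positivity),
          ENNReal.ofReal_natCast,
          ENNReal.ofReal_sum_of_nonneg fun l hl => mul_nonneg (hw0 l) (hc0 l hl)]
    _ ≤ ENNReal.ofReal α := by
        apply ENNReal.ofReal_le_ofReal
        have hrow := hDub I.card (Finset.mem_Icc.2 ⟨hi1, hin⟩)
        calc (I.card : ℝ) * ∑ l ∈ Finset.Icc 1 n, w l * (α * c l / D)
            = α / D * ∑ l ∈ Finset.Icc 1 n, AFDPSU γ n I.card l * c l := by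
              rw [Finset.mul_sum, Finset.mul_sum]
              refine Finset.sum_congr rfl fun l _ => ?_
              rw [hw]
              field_simp
          _ ≤ α / D * D := mul_le_mul_of_nonneg_left hrow (div_nonneg hα.1.le hDpos.le)
          _ = α := div_mul_cancel₀ _ hDpos.ne'

end GenError

end
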